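/- arXiv:2105.04377 — 4 statements merged into one kernel-verified Lean document; each statement's English description precedes it below -/
import Mathlib

section
/- Let (X,d) be a complete and locally compact length space. Then the set of points x ∈ X at which strong geodesic extendibility holds is a closed subset of X. -/
open Metric Set

/-- A (pseudo-e)metric space is a *length space* if the distance between any two points
equals the infimum of the lengths of continuous curves joining them. -/
def IsLengthSpace (X : Type*) [PseudoEMetricSpace X] : Prop :=
  ∀ x y : X, edist x y =
    ⨅ (γ : ℝ → X) (_ : ContinuousOn γ (Set.Icc (0:ℝ) 1)) (_ : γ 0 = x) (_ : γ 1 = y),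
      eVariationOn γ (Set.Icc (0:ℝ) 1)

/-- A *geodesic segment* defined on `[0,a]`: a curve realizing distance,
parameterized by arc length. -/
def IsGeodesicSegment {X : Type*} [PseudoMetricSpace X] (γ : ℝ → X) (a : ℝ) : Prop :=
  ∀ u ∈ Set.Icc (0:ℝ) a, ∀ v ∈ Set.Icc (0:ℝ) a, dist (γ u) (γ v) = |u - v|

/-- *Strong geodesic extendibility* at `x`: for every `r > 0` and every `y ≠ x` there is a
point `p` with `d(x,p) = r` and a geodesic segment from `y` through `x` to `p`. -/
def StrongGeodesicExtendibilityAt {X : Type*} [PseudoMetricSpace X] (x : X) : Prop :=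
  ∀ r > (0:ℝ), ∀ y : X, y ≠ x → ∃ (p : X) (γ : ℝ → X),
    dist x p = r ∧ IsGeodesicSegment γ (dist x y + r) ∧
    γ 0 = y ∧ γ (dist x y) = x ∧ γ (dist x y + r) = p

/-!
Strong extendibility at `x` asks, for each `r > 0` and each `y ≠ x`, for a geodesic from `y` through
`x` prolonged by `r`. The condition `y ≠ x` is open, so it suffices that for fixed `y` and `r` the
points `x` admitting such a geodesic form a closed set. Freezing geodesics beyond their endpoints
turns them all into maps `ℝ → X`, and then being a geodesic through `x` is a closed condition on
`(x, γ)` for the topology of pointwise convergence. When closed balls are compact, the maps in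
question lie in the compact product of the balls `closedBall y |u|`, `u : ℝ`, and projecting a
closed set along a compact factor preserves closedness.

Closed balls are compact by the Hopf–Rinow argument: the radii of compact closed balls around a
point form a clopen subset of `ℝ`.
-/

section PreliminaryTopology

theorem edist_add_edist_le_eVariationOn_Icc {α E : Type*} [LinearOrder α] [PseudoEMetricSpace E]
    (f : α → E) {a b t : α} (ht : t ∈ Icc a b) :
    edist (f a) (f t) + edist (f t) (f b) ≤ eVariationOn f (Icc a b) :=
  calc edist (f a) (f t) + edist (f t) (f b)
      ≤ eVariationOn f (Icc a t) + eVariationOn f (Icc t b) :=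
        add_le_add
          (eVariationOn.edist_le f (left_mem_Icc.2 ht.1) (right_mem_Icc.2 ht.1))
          (eVariationOn.edist_le f (left_mem_Icc.2 ht.2) (right_mem_Icc.2 ht.2))
    _ = eVariationOn f (Icc a b) := by
        simpa only [univ_inter] using eVariationOn.Icc_add_Icc f ht.1 ht.2 (mem_univ t)

theorem totallyBounded_of_forall_subset_thickening {X : Type*} [PseudoMetricSpace X] {s : Set X}
    (h : ∀ ε > 0, ∃ t, TotallyBounded t ∧ s ⊆ thickening ε t) : TotallyBounded s := by
  refine Metric.totallyBounded_iff.2 fun ε hε ↦ ?_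
  obtain ⟨t, ht, hst⟩ := h (ε / 2) (half_pos hε)
  obtain ⟨F, hF, htF⟩ := Metric.totallyBounded_iff.1 ht (ε / 2) (half_pos hε)
  rw [← thickening_eq_biUnion_ball] at htF
  refine ⟨F, hF, ?_⟩
  rw [← thickening_eq_biUnion_ball]
  calc s ⊆ thickening (ε / 2) (thickening (ε / 2) F) :=
        hst.trans (thickening_subset_of_subset _ htF)
    _ ⊆ thickening (ε / 2 + ε / 2) F := thickening_thickening_subset _ _ _
    _ = thickening ε F := by rw [add_halves]

theorem isClosed_setOfPred_exists_mem_of_isCompact {Y Z : Type*} [TopologicalSpace Y]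
    [TopologicalSpace Z] {K : Set Z} (hK : IsCompact K) {p : Y → Z → Prop}
    (hp : IsClosed {q : Y × Z | p q.1 q.2}) : IsClosed {y | ∃ z ∈ K, p y z} := by
  have : CompactSpace K := isCompact_iff_compactSpace.1 hK
  have hpK : IsClosed {q : Y × K | p q.1 q.2} :=
    hp.preimage (continuous_fst.prodMk (continuous_subtype_val.comp continuous_snd))
  convert isClosedMap_fst_of_compactSpace _ hpK using 1
  ext y
  simp

end PreliminaryTopology

namespace IsLengthSpace

variable {X : Type*} [PseudoMetricSpace X]

theorem exists_dist_le_lt (hX : IsLengthSpace X) {x y : X} {a b : ℝ} (ha : 0 ≤ a) (hb : 0 < b)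
    (h : dist x y < a + b) : ∃ z, dist x z ≤ a ∧ dist z y < b := by
  rcases le_or_gt (dist x y) a with hxy | hxy
  · exact ⟨y, hxy, by simpa using hb⟩
  have hab : 0 < a + b := by positivity
  have hlt : edist x y < ENNReal.ofReal (a + b) := by
    rwa [edist_dist, ENNReal.ofReal_lt_ofReal_iff hab]
  rw [hX x y] at hlt
  simp only [iInf_lt_iff] at hlt
  obtain ⟨γ, hγ, rfl, rfl, hlength⟩ := hlt
  obtain ⟨t, ht, hta : dist (γ 0) (γ t) = a⟩ :=
    intermediate_value_Icc zero_le_one (f := fun t ↦ dist (γ 0) (γ t)) (by fun_prop)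
      (show a ∈ Icc (dist (γ 0) (γ 0)) (dist (γ 0) (γ 1)) from ⟨by simpa using ha, hxy.le⟩)
  have hsum := (edist_add_edist_le_eVariationOn_Icc γ ht).trans_lt hlength
  rw [edist_dist, edist_dist, ← ENNReal.ofReal_add dist_nonneg dist_nonneg,
    ENNReal.ofReal_lt_ofReal_iff hab] at hsum
  exact ⟨γ t, hta.le, by linarith⟩

theorem closedBall_subset_thickening_closedBall (hX : IsLengthSpace X) (x : X) {r s δ : ℝ}
    (hs : 0 ≤ s) (hδ : 0 < δ) (hr : r < s + δ) :
    closedBall x r ⊆ thickening δ (closedBall x s) := by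
  intro y hy
  obtain ⟨z, hxz, hzy⟩ := hX.exists_dist_le_lt hs hδ ((mem_closedBall'.1 hy).trans_lt hr)
  exact mem_thickening_iff.2 ⟨z, mem_closedBall'.2 hxz, by rwa [dist_comm]⟩

theorem isOpen_setOfPred_isCompact_closedBall [LocallyCompactSpace X] (hX : IsLengthSpace X)
    (x : X) : IsOpen {r : ℝ | IsCompact (closedBall x r)} := by
  refine isOpen_iff_mem_nhds.2 fun r (hr : IsCompact (closedBall x r)) ↦ ?_
  rcases lt_or_ge r 0 with hneg | hnonneg
  · filter_upwards [Iio_mem_nhds hneg] with s hs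
    simp [closedBall_eq_empty.2 hs]
  obtain ⟨δ, hδ, hcompact⟩ := hr.exists_isCompact_cthickening
  filter_upwards [Iio_mem_nhds (lt_add_of_pos_right r hδ)] with s hs
  exact hcompact.of_isClosed_subset isClosed_closedBall <|
    (hX.closedBall_subset_thickening_closedBall x hnonneg hδ hs).trans
      (thickening_subset_cthickening _ _)

theorem isCompact_closedBall_of_forall_lt [CompleteSpace X] (hX : IsLengthSpace X) {x : X} {r : ℝ}
    (h : ∀ s < r, IsCompact (closedBall x s)) : IsCompact (closedBall x r) := by
  rcases lt_trichotomy r 0 with hneg | rfl | hpos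
  · simp [closedBall_eq_empty.2 hneg]
  · rw [closedBall_zero']
    exact isCompact_singleton.closure
  refine isCompact_iff_totallyBounded_isComplete.2 ⟨?_, isClosed_closedBall.isComplete⟩
  refine totallyBounded_of_forall_subset_thickening fun ε hε ↦ ?_
  have hs : max 0 (r - ε / 2) < r := max_lt hpos (by linarith)
  exact ⟨closedBall x (max 0 (r - ε / 2)), (h _ hs).totallyBounded,
    hX.closedBall_subset_thickening_closedBall x (le_max_left _ _) hε
      (by linarith [le_max_right 0 (r - ε / 2)])⟩

theorem isClosed_setOfPred_isCompact_closedBall [CompleteSpace X] (hX : IsLengthSpace X) (x : X) :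
    IsClosed {r : ℝ | IsCompact (closedBall x r)} := by
  refine isClosed_of_closure_subset fun r hr ↦ hX.isCompact_closedBall_of_forall_lt fun s hs ↦ ?_
  obtain ⟨t, hst : s < t, ht : IsCompact (closedBall x t)⟩ :=
    mem_closure_iff.1 hr (Ioi s) isOpen_Ioi hs
  exact ht.of_isClosed_subset isClosed_closedBall (closedBall_subset_closedBall hst.le)

theorem properSpace [CompleteSpace X] [LocallyCompactSpace X] (hX : IsLengthSpace X) :
    ProperSpace X where
  isCompact_closedBall x r := by
    have hclopen : IsClopen {r : ℝ | IsCompact (closedBall x r)} :=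
      ⟨hX.isClosed_setOfPred_isCompact_closedBall x, hX.isOpen_setOfPred_isCompact_closedBall x⟩
    have hne : (-1 : ℝ) ∈ {r : ℝ | IsCompact (closedBall x r)} := by
      simp
    exact hclopen.eq_univ ⟨-1, hne⟩ |>.ge (mem_univ r)

end IsLengthSpace

section Clamp

/-- The nearest-point projection of `ℝ` onto `[0, a]`, for `0 ≤ a`. Unlike `Set.projIcc` it takes no
proof of `0 ≤ a`, so that `a` can vary continuously. -/
def clamp (a u : ℝ) : ℝ := max 0 (min a u)

variable {a u : ℝ}

theorem clamp_mem_Icc (ha : 0 ≤ a) (u : ℝ) : clamp a u ∈ Icc 0 a :=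
  ⟨le_max_left _ _, max_le ha (min_le_left _ _)⟩

theorem clamp_of_mem_Icc (hu : u ∈ Icc 0 a) : clamp a u = u := by
  rw [clamp, min_eq_right hu.2, max_eq_right hu.1]

theorem clamp_le_abs (a u : ℝ) : clamp a u ≤ |u| :=
  max_le (abs_nonneg u) ((min_le_right a u).trans (le_abs_self u))

@[fun_prop]
theorem continuous_clamp_left (u : ℝ) : Continuous fun a ↦ clamp a u := by
  unfold clamp
  fun_prop

end Clamp

section ClampedGeodesic

/-- A *clamped geodesic* of length `a`: a geodesic segment on `[0, a]` that stays constant on each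
side of this interval. Quantifying over all of `ℝ` makes this a closed condition on `(a, γ)`. -/
def IsClampedGeodesic {X : Type*} [PseudoMetricSpace X] (γ : ℝ → X) (a : ℝ) : Prop :=
  ∀ u v, dist (γ u) (γ v) = |clamp a u - clamp a v|

variable {X : Type*} [PseudoMetricSpace X] {γ : ℝ → X} {a : ℝ}

theorem IsGeodesicSegment.comp_clamp (h : IsGeodesicSegment γ a) (ha : 0 ≤ a) :
    IsClampedGeodesic (γ ∘ clamp a) a :=
  fun u v ↦ h _ (clamp_mem_Icc ha u) _ (clamp_mem_Icc ha v)

theorem isClosed_setOfPred_isClampedGeodesic :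
    IsClosed {q : ℝ × (ℝ → X) | IsClampedGeodesic q.2 q.1} := by
  simp only [IsClampedGeodesic, ofPred_forall]
  exact isClosed_iInter fun u ↦ isClosed_iInter fun v ↦ isClosed_eq (by fun_prop) (by fun_prop)

namespace IsClampedGeodesic

theorem isGeodesicSegment (h : IsClampedGeodesic γ a) : IsGeodesicSegment γ a := by
  intro u hu v hv
  rw [h, clamp_of_mem_Icc hu, clamp_of_mem_Icc hv]

theorem mem_closedBall (h : IsClampedGeodesic γ a) (ha : 0 ≤ a) (u : ℝ) :
    γ u ∈ closedBall (γ 0) |u| := by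
  rw [Metric.mem_closedBall, h, clamp_of_mem_Icc (left_mem_Icc.2 ha), sub_zero,
    abs_of_nonneg (clamp_mem_Icc ha u).1]
  exact clamp_le_abs a u

/-- Evaluation of `σ` at a varying time `s` is not continuous for pointwise convergence; the
right-hand side evaluates `σ` at fixed times only. -/
theorem apply_eq_iff {Y : Type*} [MetricSpace Y] {σ : ℝ → Y} {s : ℝ} {x : Y}
    (h : IsClampedGeodesic σ a) (hs : s ∈ Icc 0 a) :
    σ s = x ↔ ∀ u, dist (σ u) x = |clamp a u - s| := by
  constructor
  · rintro rfl u
    rw [h, clamp_of_mem_Icc hs]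
  · intro hx
    rw [← dist_eq_zero, hx, clamp_of_mem_Icc hs, sub_self, abs_zero]

end IsClampedGeodesic

end ClampedGeodesic

section GeodesicExtension

/-- Some geodesic from `y` to `x` extends by length `r` beyond `x`, as a geodesic segment. The far
endpoint `p` of the extension is left implicit: it is `γ (dist x y + r)`. -/
def HasGeodesicExtension {X : Type*} [PseudoMetricSpace X] (y x : X) (r : ℝ) : Prop :=
  ∃ γ : ℝ → X, IsGeodesicSegment γ (dist x y + r) ∧ γ 0 = y ∧ γ (dist x y) = x

theorem strongGeodesicExtendibilityAt_iff {X : Type*} [PseudoMetricSpace X] {x : X} :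
    StrongGeodesicExtendibilityAt x ↔ ∀ r > 0, ∀ y, y ≠ x → HasGeodesicExtension y x r := by
  refine forall₄_congr fun r hr y _ ↦ ⟨?_, ?_⟩
  · rintro ⟨_, γ, -, hγ, hy, hx, -⟩
    exact ⟨γ, hγ, hy, hx⟩
  · rintro ⟨γ, hγ, hy, hx⟩
    refine ⟨γ (dist x y + r), γ, ?_, hγ, hy, hx, rfl⟩
    have hdist := hγ (dist x y) ⟨dist_nonneg, by linarith⟩ (dist x y + r)
      ⟨by positivity, le_rfl⟩
    rwa [hx, sub_add_cancel_left, abs_neg, abs_of_pos hr] at hdist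

variable {X : Type*} [MetricSpace X] {r : ℝ}

theorem hasGeodesicExtension_iff_exists_isClampedGeodesic {x y : X} (hr : 0 ≤ r) :
    HasGeodesicExtension y x r ↔ ∃ γ ∈ univ.pi fun u : ℝ ↦ closedBall y |u|,
      IsClampedGeodesic γ (dist x y + r) ∧ γ 0 = y ∧
        ∀ u, dist (γ u) x = |clamp (dist x y + r) u - dist x y| := by
  have ha : 0 ≤ dist x y + r := by positivity
  have hd : dist x y ∈ Icc 0 (dist x y + r) := ⟨dist_nonneg, le_add_of_nonneg_right hr⟩
  constructor
  · rintro ⟨γ, hγ, hy, hx⟩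
    have hclamped := hγ.comp_clamp ha
    have hy' : (γ ∘ clamp (dist x y + r)) 0 = y := by
      rw [Function.comp_apply, clamp_of_mem_Icc (left_mem_Icc.2 ha), hy]
    have hx' : (γ ∘ clamp (dist x y + r)) (dist x y) = x := by
      rw [Function.comp_apply, clamp_of_mem_Icc hd, hx]
    refine ⟨_, fun u _ ↦ ?_, hclamped, hy', (hclamped.apply_eq_iff hd).1 hx'⟩
    simpa only [hy'] using hclamped.mem_closedBall ha u
  · rintro ⟨γ, -, hγ, hy, hx⟩
    exact ⟨γ, hγ.isGeodesicSegment, hy, (hγ.apply_eq_iff hd).2 hx⟩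

theorem isClosed_setOfPred_hasGeodesicExtension [ProperSpace X] (y : X) (hr : 0 ≤ r) :
    IsClosed {x : X | HasGeodesicExtension y x r} := by
  simp only [hasGeodesicExtension_iff_exists_isClampedGeodesic hr]
  refine isClosed_setOfPred_exists_mem_of_isCompact
    (isCompact_univ_pi fun u ↦ isCompact_closedBall y |u|) ?_
  have hgeodesic : IsClosed {q : X × (ℝ → X) | IsClampedGeodesic q.2 (dist q.1 y + r)} :=
    isClosed_setOfPred_isClampedGeodesic.preimage
      (f := fun q : X × (ℝ → X) ↦ (dist q.1 y + r, q.2)) (by fun_prop)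
  have hstart : IsClosed {q : X × (ℝ → X) | q.2 0 = y} := isClosed_eq (by fun_prop) (by fun_prop)
  have hthrough : IsClosed {q : X × (ℝ → X) |
      ∀ u, dist (q.2 u) q.1 = |clamp (dist q.1 y + r) u - dist q.1 y|} := by
    rw [ofPred_forall]
    exact isClosed_iInter fun u ↦ isClosed_eq (by fun_prop) (by fun_prop)
  exact hgeodesic.inter (hstart.inter hthrough)

end GeodesicExtension

theorem isClosed_strongGeodesicExtendibility_general {X : Type*} [MetricSpace X] [ProperSpace X] :
    IsClosed {x : X | StrongGeodesicExtendibilityAt x} := by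
  simp only [strongGeodesicExtendibilityAt_iff, ofPred_forall]
  refine isClosed_iInter fun r ↦ isClosed_iInter fun hr ↦ isClosed_iInter fun y ↦ ?_
  exact isClosed_imp (isOpen_ne_fun continuous_const continuous_id)
    (isClosed_setOfPred_hasGeodesicExtension y hr.le)

/-- In a complete, locally compact length space, the set of points at which
strong geodesic extendibility holds is closed. -/
theorem isClosed_strongGeodesicExtendibility {X : Type*} [MetricSpace X] [CompleteSpace X]
    [LocallyCompactSpace X] (hX : IsLengthSpace X) :
    IsClosed {x : X | StrongGeodesicExtendibilityAt x} :=
  have := hX.properSpace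
  isClosed_strongGeodesicExtendibility_general
end

section
/- Let (X,d) be a complete and locally compact length space such that for all x, y ∈ X and all t, s ≥ 0 the Hausdorff distance between closed balls satisfies d_H(B̄_t(x), B̄_s(y)) = d(x,y) + |t−s|. Then (X,d) is strongly geodesically complete: for every x ∈ X, every r > 0 and every y ≠ x there exist a point p with d(x,p) = r and a geodesic segment γ:[0,d(x,y)+r] → X with γ(0)=y, γ(d(x,y))=x and γ(d(x,y)+r)=p. -/
open Metric Set

/-!
Since `d_H(B̄_t(x), B̄_s(x)) = |t - s|`, every closed ball is a closed thickening of the smaller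
concentric balls. With completeness and local compactness this makes closed balls compact (as in
Hopf–Rinow), and compactness then yields midpoints, so the space is Menger convex.
Now take `p` in `B̄_r(x)` farthest from `y`. From `d_H(B̄_r(x), {y}) = d(x,y) + r` we get
`d(p,y) = d(x,y) + r`, so `x` lies between `y` and `p`. A maximal set containing `y`, `x`, `p` on
which the distance from `y` is an isometry into `ℝ` is the desired geodesic: it is complete, and by
Menger convexity its image has no gaps.
-/

section ThickenedBalls

variable {X : Type*} [PseudoMetricSpace X] {x : X}

theorem subset_cthickening_hausdorffDist {s t : Set X} (fin : hausdorffEDist s t ≠ ⊤) :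
    s ⊆ cthickening (hausdorffDist s t) t := fun _ hx => by
  rw [mem_cthickening_iff, hausdorffDist, ENNReal.ofReal_toReal fin]
  exact infEDist_le_hausdorffEDist_of_mem hx

theorem totallyBounded_of_forall_subset_cthickening {s : Set X}
    (h : ∀ ε > 0, ∃ t, TotallyBounded t ∧ s ⊆ cthickening ε t) : TotallyBounded s := by
  refine Metric.totallyBounded_iff.2 fun ε hε => ?_
  obtain ⟨t, ht, hst⟩ := h (ε / 3) (by positivity)
  obtain ⟨F, hF, htF⟩ := Metric.totallyBounded_iff.1 ht (ε / 2) (by positivity)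
  rw [← thickening_eq_biUnion_ball] at htF
  refine ⟨F, hF, ?_⟩
  calc
    s ⊆ cthickening (ε / 3) t := hst
    _ ⊆ thickening (ε / 2) t := cthickening_subset_thickening' (by positivity) (by linarith) t
    _ ⊆ thickening (ε / 2) (thickening (ε / 2) F) := thickening_subset_of_subset _ htF
    _ ⊆ thickening (ε / 2 + ε / 2) F := thickening_thickening_subset _ _ F
    _ = ⋃ w ∈ F, ball w ε := by rw [add_halves, thickening_eq_biUnion_ball]

/-- Every closed ball about `x` lies in the closed thickening of each smaller concentric ball, by
the difference of the radii. This is an approximate form of the length property: a point at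
distance `r + δ` from `x` can be reached by passing nearly at distances `r` from `x` and `δ` from
the point. -/
def HasThickenedBallsAt (x : X) : Prop :=
  ∀ ⦃r δ : ℝ⦄, 0 ≤ r → 0 ≤ δ → closedBall x (r + δ) ⊆ cthickening δ (closedBall x r)

theorem hasThickenedBallsAt_of_hausdorffDist
    (h : ∀ t s : ℝ, 0 ≤ t → 0 ≤ s →
      hausdorffDist (closedBall x t) (closedBall x s) = |t - s|) :
    HasThickenedBallsAt x := by
  intro r δ hr hδ
  have hrδ : 0 ≤ r + δ := add_nonneg hr hδ
  have hdist : hausdorffDist (closedBall x (r + δ)) (closedBall x r) = δ := by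
    rw [h _ _ hrδ hr, add_sub_cancel_left, abs_of_nonneg hδ]
  have hfin : hausdorffEDist (closedBall x (r + δ)) (closedBall x r) ≠ ⊤ :=
    hausdorffEDist_ne_top_of_nonempty_of_bounded (nonempty_closedBall.2 hrδ)
      (nonempty_closedBall.2 hr) isBounded_closedBall isBounded_closedBall
  simpa only [hdist] using subset_cthickening_hausdorffDist hfin

namespace HasThickenedBallsAt

theorem isCompact_closedBall_of_forall_lt [CompleteSpace X] (hx : HasThickenedBallsAt x) {R : ℝ}
    (hR : 0 < R) (h : ∀ r < R, IsCompact (closedBall x r)) : IsCompact (closedBall x R) := by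
  refine (totallyBounded_of_forall_subset_cthickening fun ε hε => ?_).isCompact_of_isClosed
    isClosed_closedBall
  set δ := min ε R
  have hδ : 0 < δ := lt_min hε hR
  refine ⟨closedBall x (R - δ), (h _ (sub_lt_self R hδ)).totallyBounded, ?_⟩
  calc
    closedBall x R = closedBall x (R - δ + δ) := by rw [sub_add_cancel]
    _ ⊆ cthickening δ (closedBall x (R - δ)) := hx (sub_nonneg.2 (min_le_right ε R)) hδ.le
    _ ⊆ cthickening ε (closedBall x (R - δ)) := cthickening_mono (min_le_left ε R) _

theorem exists_isCompact_closedBall_add [LocallyCompactSpace X] (hx : HasThickenedBallsAt x)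
    {r : ℝ} (hr : 0 ≤ r) (h : IsCompact (closedBall x r)) :
    ∃ δ > 0, IsCompact (closedBall x (r + δ)) := by
  obtain ⟨δ, hδ, hcompact⟩ := h.exists_isCompact_cthickening
  exact ⟨δ, hδ, hcompact.of_isClosed_subset isClosed_closedBall (hx hr hδ.le)⟩

theorem isCompact_closedBall [CompleteSpace X] [LocallyCompactSpace X]
    (hx : HasThickenedBallsAt x) (R : ℝ) : IsCompact (closedBall x R) := by
  have hmono : ∀ {r s : ℝ}, r ≤ s → IsCompact (closedBall x s) → IsCompact (closedBall x r) :=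
    fun hrs hs => hs.of_isClosed_subset isClosed_closedBall (closedBall_subset_closedBall hrs)
  have hzero : IsCompact (closedBall x 0) := by
    rw [closedBall_zero']
    exact isCompact_singleton.closure
  rcases le_total R 0 with hR | hR
  · exact hmono hR hzero
  have hclosed : IsClosed ({r | IsCompact (closedBall x r)} ∩ Icc 0 R) := by
    refine isClosed_of_closure_subset fun r hr => ?_
    have hrR : r ∈ Icc 0 R := closure_minimal inter_subset_right isClosed_Icc hr
    refine ⟨?_, hrR⟩
    rcases hrR.1.eq_or_lt with rfl | hpos
    · exact hzero
    refine hx.isCompact_closedBall_of_forall_lt hpos fun s hs => ?_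
    obtain ⟨u, hsu, hu, -⟩ := mem_closure_iff.1 hr (Ioi s) isOpen_Ioi hs
    exact hmono (le_of_lt hsu) hu
  refine hclosed.mem_of_ge_of_forall_exists_gt hzero hR fun r ⟨hr, h0r, hrR⟩ => ?_
  obtain ⟨δ, hδ, hrδ⟩ := hx.exists_isCompact_closedBall_add h0r hr
  exact ⟨min (r + δ) R, hmono (min_le_left _ _) hrδ,
    lt_min (lt_add_of_pos_right r hδ) hrR, min_le_right _ _⟩

theorem exists_dist_eq (hx : HasThickenedBallsAt x) {y : X} {r : ℝ}
    (hcompact : IsCompact (closedBall x r)) (hr : r ∈ Icc 0 (dist x y)) :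
    ∃ z, dist x z = r ∧ dist z y = dist x y - r := by
  have hδ : 0 ≤ dist x y - r := sub_nonneg.2 hr.2
  have hy : y ∈ cthickening (dist x y - r) (closedBall x r) :=
    hx hr.1 hδ (mem_closedBall'.2 (by linarith))
  rw [hcompact.cthickening_eq_biUnion_closedBall hδ] at hy
  obtain ⟨z, hz, hzy⟩ := mem_iUnion₂.1 hy
  rw [mem_closedBall'] at hz hzy
  have htri := dist_triangle x z y
  exact ⟨z, by linarith, by linarith⟩

end HasThickenedBallsAt

end ThickenedBalls

section Aligned

variable {X : Type*} [PseudoMetricSpace X] {o : X} {A : Set X}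

/-- The distance from `o` restricts to an isometry from `A` into `ℝ`, i.e. `A` lies on a potential
geodesic issuing from `o`. The set `A` need not contain `o`. -/
def IsAligned (o : X) (A : Set X) : Prop :=
  ∀ a ∈ A, ∀ b ∈ A, dist a b = |dist o a - dist o b|

theorem isAligned_triple {x p : X} (h : dist o x + dist x p = dist o p) :
    IsAligned o {o, x, p} := by
  have hop := dist_comm p o
  have hox := dist_comm x o
  have hxp := dist_comm p x
  have habs : |dist o x - dist o p| = dist x p := by
    rw [← h, sub_add_cancel_left, abs_neg, abs_of_nonneg dist_nonneg]
  rintro a (rfl | rfl | rfl) b (rfl | rfl | rfl) <;>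
    simp_all [abs_sub_comm]

namespace IsAligned

theorem closure (hA : IsAligned o A) : IsAligned o (closure A) := by
  have hclosed : IsClosed {q : X × X | dist q.1 q.2 = |dist o q.1 - dist o q.2|} :=
    isClosed_eq (by fun_prop) (by fun_prop)
  have hsub := closure_minimal (s := A ×ˢ A) (fun q hq => hA q.1 hq.1 q.2 hq.2) hclosed
  rw [closure_prod_eq] at hsub
  exact fun a ha b hb => hsub (mk_mem_prod ha hb)

theorem sUnion {c : Set (Set X)} (hc : IsChain (· ⊆ ·) c) (h : ∀ A ∈ c, IsAligned o A) :
    IsAligned o (⋃₀ c) := by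
  rintro a ⟨A, hA, ha⟩ b ⟨B, hB, hb⟩
  obtain ⟨C, hC, hAC, hBC⟩ := hc.directedOn A hA B hB
  exact h C hC a (hAC ha) b (hBC hb)

theorem exists_maximal_superset (hA : IsAligned o A) : ∃ M, A ⊆ M ∧ Maximal (IsAligned o) M :=
  zorn_subset_nonempty {B | IsAligned o B}
    (fun c hc hchain _ => ⟨⋃₀ c, sUnion hchain hc, fun _ => subset_sUnion_of_mem⟩) A hA

theorem isClosed_of_maximal (hA : Maximal (IsAligned o) A) : IsClosed A :=
  isClosed_of_closure_subset (hA.le_of_ge hA.prop.closure subset_closure)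

theorem isClosed_image_dist [CompleteSpace X] (hA : IsAligned o A) (hclosed : IsClosed A) :
    IsClosed (dist o '' A) := by
  have hiso : Isometry (A.domRestrict (dist o)) :=
    Isometry.of_dist_eq fun a b => (hA a a.2 b b.2).symm
  have := hclosed.isComplete.completeSpace_coe
  rw [← range_domRestrict]
  exact hiso.isUniformInducing.isComplete_range.isClosed

theorem dist_add_dist_eq_of_between (hA : IsAligned o A) {a b z : X} (ha : a ∈ A) (hb : b ∈ A)
    (hab : dist o a ≤ dist o b) (hz : dist a z + dist z b = dist a b) :
    dist o a + dist a z = dist o z ∧ dist o z + dist z b = dist o b := by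
  have hdist := hA a ha b hb
  rw [abs_of_nonpos (sub_nonpos.2 hab)] at hdist
  have haz := dist_triangle o a z
  have hzb := dist_triangle o z b
  constructor <;> linarith

theorem insert_of_between (hA : IsAligned o A) {a b z : X} (ha : a ∈ A) (hb : b ∈ A)
    (hab : dist o a ≤ dist o b) (hz : dist a z + dist z b = dist a b)
    (hgap : ∀ c ∈ A, dist o c ∉ Ioo (dist o a) (dist o b)) : IsAligned o (insert z A) := by
  obtain ⟨hoz, hzb⟩ := hA.dist_add_dist_eq_of_between ha hb hab hz
  have hzc : ∀ c ∈ A, dist z c = |dist o z - dist o c| := by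
    intro c hc
    refine le_antisymm ?_ (by simpa only [dist_comm o] using abs_dist_sub_le z c o)
    rcases le_or_gt (dist o c) (dist o a) with hca | hac
    · have hdist := hA a ha c hc
      rw [abs_of_nonneg (sub_nonneg.2 hca)] at hdist
      calc
        dist z c ≤ dist a z + dist a c := dist_triangle_left z c a
        _ = dist o z - dist o c := by linarith
        _ ≤ |dist o z - dist o c| := le_abs_self _
    · have hbc : dist o b ≤ dist o c := not_lt.1 fun hcb => hgap c hc ⟨hac, hcb⟩
      have hdist := hA b hb c hc
      rw [abs_of_nonpos (sub_nonpos.2 hbc)] at hdist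
      calc
        dist z c ≤ dist z b + dist b c := dist_triangle z b c
        _ = -(dist o z - dist o c) := by linarith
        _ ≤ |dist o z - dist o c| := neg_le_abs _
  rintro c (rfl | hc) d (rfl | hd)
  · simp only [dist_self, sub_self, abs_zero]
  · exact hzc d hd
  · rw [dist_comm, abs_sub_comm, hzc c hc]
  · exact hA c hc d hd

end IsAligned

end Aligned

theorem exists_Ioo_disjoint_of_isClosed {α : Type*} [ConditionallyCompleteLinearOrder α]
    [TopologicalSpace α] [OrderTopology α] {S : Set α} (hS : IsClosed S) {u t v : α}
    (hu : u ∈ S) (hv : v ∈ S) (ht : t ∉ S) (hut : u ≤ t) (htv : t ≤ v) :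
    ∃ a ∈ S, ∃ b ∈ S, t ∈ Ioo a b ∧ Disjoint S (Ioo a b) := by
  have hbelow : BddAbove (S ∩ Iic t) := bddAbove_Iic.mono inter_subset_right
  have habove : BddBelow (S ∩ Ici t) := bddBelow_Ici.mono inter_subset_right
  obtain ⟨haS, hat⟩ := (hS.inter isClosed_Iic).csSup_mem ⟨u, hu, hut⟩ hbelow
  obtain ⟨hbS, htb⟩ := (hS.inter isClosed_Ici).csInf_mem ⟨v, hv, htv⟩ habove
  have ne_of_mem : ∀ {c}, c ∈ S → c ≠ t := fun hc hct => ht (hct ▸ hc)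
  refine ⟨_, haS, _, hbS, ⟨lt_of_le_of_ne hat (ne_of_mem haS),
    lt_of_le_of_ne htb (ne_of_mem hbS).symm⟩, disjoint_left.2 fun c hc ⟨hac, hcb⟩ => ?_⟩
  rcases le_total c t with hct | htc
  · exact hac.not_ge (le_csSup hbelow ⟨hc, hct⟩)
  · exact hcb.not_ge (csInf_le habove ⟨hc, htc⟩)

section Menger

/-- *Menger convexity*: strictly between any two distinct points there is a third one. It is the
convexity assumption under which complete spaces are geodesic. -/
def IsMengerConvex (X : Type*) [MetricSpace X] : Prop :=
  ∀ ⦃x y : X⦄, x ≠ y → ∃ z, z ≠ x ∧ z ≠ y ∧ dist x z + dist z y = dist x y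

variable {X : Type*} [MetricSpace X]

theorem isMengerConvex_of_hasThickenedBallsAt [ProperSpace X]
    (h : ∀ x : X, HasThickenedBallsAt x) : IsMengerConvex X := by
  intro x y hxy
  have hpos : 0 < dist x y := dist_pos.2 hxy
  obtain ⟨z, hxz, hzy⟩ := (h x).exists_dist_eq (isCompact_closedBall x (dist x y / 2))
    ⟨by positivity, half_le_self hpos.le⟩
  exact ⟨z, dist_pos.1 (by rw [dist_comm]; linarith), dist_pos.1 (by linarith), by linarith⟩

namespace IsMengerConvex

variable [CompleteSpace X]

theorem ordConnected_image_dist_of_maximal (hX : IsMengerConvex X) {o : X} {M : Set X}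
    (hM : Maximal (IsAligned o) M) : (dist o '' M).OrdConnected := by
  refine ⟨fun u hu v hv t ⟨hut, htv⟩ => by_contra fun ht => ?_⟩
  obtain ⟨_, ⟨a, ha, rfl⟩, _, ⟨b, hb, rfl⟩, htab, hgap⟩ := exists_Ioo_disjoint_of_isClosed
    (hM.prop.isClosed_image_dist (IsAligned.isClosed_of_maximal hM)) hu hv ht hut htv
  have hlt : dist o a < dist o b := htab.1.trans htab.2
  obtain ⟨z, hza, hzb, hz⟩ := hX (ne_of_apply_ne (dist o) hlt.ne)
  obtain ⟨haz, hbz⟩ := hM.prop.dist_add_dist_eq_of_between ha hb hlt.le hz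
  have hgap' : ∀ c ∈ M, dist o c ∉ Ioo (dist o a) (dist o b) := fun c hc =>
    disjoint_left.1 hgap (mem_image_of_mem _ hc)
  have hzM : z ∈ M := hM.le_of_ge (hM.prop.insert_of_between ha hb hlt.le hz hgap')
    (subset_insert z M) (mem_insert z M)
  have hza_pos : 0 < dist a z := dist_pos.2 hza.symm
  have hzb_pos : 0 < dist z b := dist_pos.2 hzb
  exact hgap' z hzM ⟨by linarith, by linarith⟩

theorem exists_isGeodesicSegment_of_isAligned (hX : IsMengerConvex X) {o p : X} {A : Set X}
    (hA : IsAligned o A) (ho : o ∈ A) (hp : p ∈ A) :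
    ∃ γ : ℝ → X, IsGeodesicSegment γ (dist o p) ∧ ∀ a ∈ A, γ (dist o a) = a := by
  obtain ⟨M, hAM, hM⟩ := hA.exists_maximal_superset
  have : Nonempty X := ⟨o⟩
  set γ := Function.invFunOn (dist o) M
  have hγ : ∀ t ∈ dist o '' M, γ t ∈ M ∧ dist o (γ t) = t := fun _ => Function.invFunOn_pos
  have hIcc : Icc 0 (dist o p) ⊆ dist o '' M :=
    (hX.ordConnected_image_dist_of_maximal hM).out ⟨o, hAM ho, dist_self o⟩ ⟨p, hAM hp, rfl⟩
  refine ⟨γ, fun u hu v hv => ?_, fun a ha => ?_⟩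
  · obtain ⟨huM, hu_eq⟩ := hγ u (hIcc hu)
    obtain ⟨hvM, hv_eq⟩ := hγ v (hIcc hv)
    rw [hM.prop _ huM _ hvM, hu_eq, hv_eq]
  · obtain ⟨hγM, hγ_eq⟩ := hγ (dist o a) ⟨a, hAM ha, rfl⟩
    exact dist_eq_zero.1 (by rw [hM.prop _ hγM _ (hAM ha), hγ_eq, sub_self, abs_zero])

end IsMengerConvex

end Menger

theorem exists_mem_dist_eq_hausdorffDist_singleton {X : Type*} [PseudoMetricSpace X] {s : Set X}
    (hs : IsCompact s) (hne : s.Nonempty) (y : X) : ∃ p ∈ s, dist p y = hausdorffDist s {y} := by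
  obtain ⟨p, hp, hmax⟩ := hs.exists_isMaxOn hne (f := fun q => dist q y) (by fun_prop)
  refine ⟨p, hp, le_antisymm ?_ ?_⟩
  · have hfin := hausdorffEDist_ne_top_of_nonempty_of_bounded hne (singleton_nonempty y)
      hs.isBounded Bornology.isBounded_singleton
    simpa only [infDist_singleton] using infDist_le_hausdorffDist_of_mem hp hfin
  · refine hausdorffDist_le_of_mem_dist dist_nonneg (fun q hq => ⟨y, rfl, hmax hq⟩) ?_
    rintro _ rfl
    exact ⟨p, hp, (dist_comm _ _).le⟩

theorem exists_dist_eq_and_dist_eq_add {X : Type*} [PseudoMetricSpace X] {x y : X} {r : ℝ}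
    (hr : 0 ≤ r) (hcompact : IsCompact (closedBall x r))
    (h : hausdorffDist (closedBall x r) {y} = dist x y + r) :
    ∃ p, dist x p = r ∧ dist y p = dist y x + r := by
  obtain ⟨p, hp, hpy⟩ :=
    exists_mem_dist_eq_hausdorffDist_singleton hcompact (nonempty_closedBall.2 hr) y
  rw [h, dist_comm p y, dist_comm x y] at hpy
  have hxp : dist x p ≤ r := mem_closedBall'.1 hp
  have htri := dist_triangle y x p
  exact ⟨p, by linarith, hpy⟩

theorem stronglyGeodesicallyComplete_of_hausdorffDist_general {X : Type*} [MetricSpace X]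
    [CompleteSpace X] [LocallyCompactSpace X]
    (hform : ∀ (x y : X) (t s : ℝ), 0 ≤ t → 0 ≤ s →
      Metric.hausdorffDist (closedBall x t) (closedBall y s) = dist x y + |t - s|) (x : X) :
    StrongGeodesicExtendibilityAt x := by
  have hballs : ∀ x : X, HasThickenedBallsAt x := fun x =>
    hasThickenedBallsAt_of_hausdorffDist fun t s ht hs => by rw [hform x x t s ht hs]; simp
  have : ProperSpace X := ⟨fun x => (hballs x).isCompact_closedBall⟩
  intro r hr y _
  have hdist : hausdorffDist (closedBall x r) {y} = dist x y + r := by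
    simpa [abs_of_pos hr] using hform x y r 0 hr.le le_rfl
  obtain ⟨p, hxp, hyp⟩ := exists_dist_eq_and_dist_eq_add hr.le (isCompact_closedBall x r) hdist
  have haligned : IsAligned y {y, x, p} := isAligned_triple (by rw [hxp, hyp])
  obtain ⟨γ, hγ, hγA⟩ := (isMengerConvex_of_hasThickenedBallsAt hballs)
    |>.exists_isGeodesicSegment_of_isAligned haligned (o := y) (p := p) (by simp) (by simp)
  rw [dist_comm x y, ← hyp]
  exact ⟨p, γ, hxp, hγ, by simpa using hγA y (by simp), hγA x (by simp), hγA p (by simp)⟩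

/-- If in a complete, locally compact length space the Hausdorff distance
between closed balls is given by `d_H(B̄_t(x), B̄_s(y)) = d(x,y) + |t - s|`, then the space
is strongly geodesically complete. -/
theorem stronglyGeodesicallyComplete_of_hausdorffDist {X : Type*} [MetricSpace X]
    [CompleteSpace X] [LocallyCompactSpace X] (hX : IsLengthSpace X)
    (hform : ∀ (x y : X) (t s : ℝ), 0 ≤ t → 0 ≤ s →
      Metric.hausdorffDist (closedBall x t) (closedBall y s) = dist x y + |t - s|) :
    ∀ x : X, StrongGeodesicExtendibilityAt x :=
  stronglyGeodesicallyComplete_of_hausdorffDist_general hform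
end

section
/- Let (X,d_X) and (Y,d_Y) be complete, locally compact length spaces, and equip X × Y with the maximum metric d_∞((x,y),(a,b)) = max{d_X(x,a), d_Y(y,b)}. Then for all (x,y),(a,b) ∈ X × Y and t,s ≥ 0, the Hausdorff distance of closed balls in (X×Y, d_∞) satisfies d_H^∞(B̄_t(x,y), B̄_s(a,b)) = max{ d_H^X(B̄_t(x), B̄_s(a)), d_H^Y(B̄_t(y), B̄_s(b)) }, where d_H^X, d_H^Y and d_H^∞ denote the Hausdorff distances in X, Y and (X×Y, d_∞) respectively. -/
open Metric Set

/-!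
For the maximum metric a closed ball is the product of the closed balls of its factors, so it
suffices to compare products of arbitrary nonempty sets. The Hausdorff distance of two products is
at most the maximum of those of the factors because a nearby point can be sought in each coordinate
separately; it is at least that maximum because the coordinate projections are `1`-Lipschitz and
recover the factors as images of the products.
-/

section PseudoEMetric

variable {X Y : Type*} [PseudoEMetricSpace X] [PseudoEMetricSpace Y]

theorem infEDist_image_le_of_lipschitzWith {K : NNReal} {f : X → Y} (hf : LipschitzWith K f)
    (hK : K ≠ 0) (x : X) (t : Set X) : infEDist (f x) (f '' t) ≤ K * infEDist x t := by
  simp only [infEDist, iInf_image, ENNReal.mul_iInf_of_ne (ENNReal.coe_ne_zero.2 hK)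
    ENNReal.coe_ne_top]
  exact iInf₂_mono fun y _ ↦ hf x y

theorem hausdorffEDist_image_le_of_lipschitzWith {K : NNReal} {f : X → Y} (hf : LipschitzWith K f)
    (hK : K ≠ 0) (s t : Set X) : hausdorffEDist (f '' s) (f '' t) ≤ K * hausdorffEDist s t := by
  have image_le {u v : Set X} : ∀ y ∈ f '' u, infEDist y (f '' v) ≤ K * hausdorffEDist u v := by
    rintro _ ⟨x, hx, rfl⟩
    calc infEDist (f x) (f '' v) ≤ K * infEDist x v :=
          infEDist_image_le_of_lipschitzWith hf hK x v
      _ ≤ K * hausdorffEDist u v := by gcongr; exact infEDist_le_hausdorffEDist_of_mem hx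
  exact hausdorffEDist_le_of_infEDist image_le (hausdorffEDist_comm (s := s) ▸ image_le)

theorem hausdorffEDist_fst_le_prod {s₁ t₁ : Set X} {s₂ t₂ : Set Y} (hs₂ : s₂.Nonempty)
    (ht₂ : t₂.Nonempty) : hausdorffEDist s₁ t₁ ≤ hausdorffEDist (s₁ ×ˢ s₂) (t₁ ×ˢ t₂) := by
  simpa [fst_image_prod _ hs₂, fst_image_prod _ ht₂] using
    hausdorffEDist_image_le_of_lipschitzWith LipschitzWith.prod_fst one_ne_zero
      (s₁ ×ˢ s₂) (t₁ ×ˢ t₂)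

theorem hausdorffEDist_snd_le_prod {s₁ t₁ : Set X} {s₂ t₂ : Set Y} (hs₁ : s₁.Nonempty)
    (ht₁ : t₁.Nonempty) : hausdorffEDist s₂ t₂ ≤ hausdorffEDist (s₁ ×ˢ s₂) (t₁ ×ˢ t₂) := by
  simpa [snd_image_prod hs₁, snd_image_prod ht₁] using
    hausdorffEDist_image_le_of_lipschitzWith LipschitzWith.prod_snd one_ne_zero
      (s₁ ×ˢ s₂) (t₁ ×ˢ t₂)

theorem hausdorffEDist_prod {s₁ : Set X} {s₂ : Set Y} (hs₁ : s₁.Nonempty) (hs₂ : s₂.Nonempty)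
    (t₁ : Set X) (t₂ : Set Y) :
    hausdorffEDist (s₁ ×ˢ s₂) (t₁ ×ˢ t₂) = max (hausdorffEDist s₁ t₁) (hausdorffEDist s₂ t₂) := by
  refine le_antisymm hausdorffEDist_prod_le ?_
  rcases (t₁ ×ˢ t₂).eq_empty_or_nonempty with ht | ht
  · simp only [ht, hausdorffEDist_empty (hs₁.prod hs₂), le_top]
  · exact max_le (hausdorffEDist_fst_le_prod hs₂ ht.snd) (hausdorffEDist_snd_le_prod hs₁ ht.fst)

end PseudoEMetric

section PseudoMetric

variable {X Y : Type*} [PseudoMetricSpace X] [PseudoMetricSpace Y]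

theorem hausdorffDist_prod {s₁ t₁ : Set X} {s₂ t₂ : Set Y} (hs₁ : s₁.Nonempty)
    (hs₂ : s₂.Nonempty) (h₁ : hausdorffEDist s₁ t₁ ≠ ⊤) (h₂ : hausdorffEDist s₂ t₂ ≠ ⊤) :
    hausdorffDist (s₁ ×ˢ s₂) (t₁ ×ˢ t₂) = max (hausdorffDist s₁ t₁) (hausdorffDist s₂ t₂) := by
  simp only [hausdorffDist, hausdorffEDist_prod hs₁ hs₂, ENNReal.toReal_max h₁ h₂]

theorem hausdorffEDist_closedBall_ne_top (x a : X) {t s : ℝ} (ht : 0 ≤ t) (hs : 0 ≤ s) :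
    hausdorffEDist (closedBall x t) (closedBall a s) ≠ ⊤ :=
  hausdorffEDist_ne_top_of_nonempty_of_bounded (nonempty_closedBall.2 ht) (nonempty_closedBall.2 hs)
    isBounded_closedBall isBounded_closedBall

theorem hausdorffDist_closedBall_prod_max_general (x a : X) (y b : Y) {t s : ℝ} (ht : 0 ≤ t)
    (hs : 0 ≤ s) :
    hausdorffDist (closedBall (x, y) t) (closedBall (a, b) s) =
      max (hausdorffDist (closedBall x t) (closedBall a s))
        (hausdorffDist (closedBall y t) (closedBall b s)) := by
  rw [← closedBall_prod_same, ← closedBall_prod_same]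
  exact hausdorffDist_prod (nonempty_closedBall.2 ht) (nonempty_closedBall.2 ht)
    (hausdorffEDist_closedBall_ne_top x a ht hs) (hausdorffEDist_closedBall_ne_top y b ht hs)

end PseudoMetric

/-- For complete, locally compact length spaces `X` and `Y`, the
Hausdorff distance between closed balls in `X × Y` with the maximum metric
(`dist ((x,y),(a,b)) = max (dist x a) (dist y b)`, the product metric of Mathlib) is the
maximum of the Hausdorff distances of the factor balls. -/
theorem hausdorffDist_closedBall_prod_max {X Y : Type*} [MetricSpace X] [MetricSpace Y]
    [CompleteSpace X] [CompleteSpace Y] [LocallyCompactSpace X] [LocallyCompactSpace Y]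
    (hX : IsLengthSpace X) (hY : IsLengthSpace Y)
    (x a : X) (y b : Y) (t s : ℝ) (ht : 0 ≤ t) (hs : 0 ≤ s) :
    Metric.hausdorffDist (closedBall ((x, y) : X × Y) t) (closedBall ((a, b) : X × Y) s) =
      max (Metric.hausdorffDist (closedBall x t) (closedBall a s))
        (Metric.hausdorffDist (closedBall y t) (closedBall b s)) :=
  hausdorffDist_closedBall_prod_max_general x a y b ht hs
end

section
/- Let (X,d) be a complete, locally compact, strongly geodesically complete length space and let G be a group of isometries of X acting properly on X, i.e. for each x ∈ X there exists r > 0 such that {g ∈ G : g(B_r(x)) ∩ B_r(x) ≠ ∅} is finite. Then the induced action of G on the space Σ(X) of compact closed balls of X (given by g · B̄_t(x) = g(B̄_t(x)) = B̄_t(g(x))), which is by isometries of the Hausdorff distance d_H, is proper: for each B̄_r(x) ∈ Σ(X) there exists R > 0 such that {g ∈ G : the d_H-ball of radius R around B̄_r(g(x)) meets the d_H-ball of radius R around B̄_r(x)} is finite. -/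
open Metric Set

/-!
Let `s ≤ t` and `x ≠ y`. Extending a geodesic from `y` to `x` beyond `x` by `t` gives a point of
`closedBall x t` at distance `dist x y + t` from `y`, hence at distance at least
`dist x y + (t - s)` from `closedBall y s`. So the Hausdorff distance of two balls dominates the
distance of their centers, and if some ball is `R`-close to the balls of radius `t` around both
`g x` and `x`, then `g` moves `x` by less than `2 * R`.
-/

theorem IsGeodesicSegment.dist_zero_eq {X : Type*} [PseudoMetricSpace X] {γ : ℝ → X} {a : ℝ}
    (hγ : IsGeodesicSegment γ a) (ha : 0 ≤ a) : dist (γ 0) (γ a) = a := by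
  rw [hγ 0 (left_mem_Icc.2 ha) a (right_mem_Icc.2 ha), zero_sub, abs_neg, abs_of_nonneg ha]

theorem dist_le_add_hausdorffDist_closedBall {X : Type*} [PseudoMetricSpace X] {A : Set X}
    {p y : X} {s : ℝ} (hA : Bornology.IsBounded A) (hp : p ∈ A) (hs : 0 ≤ s) :
    dist p y ≤ s + hausdorffDist A (closedBall y s) := by
  have hne : (closedBall y s).Nonempty := nonempty_closedBall.2 hs
  have hfin : hausdorffEDist A (closedBall y s) ≠ ⊤ :=
    hausdorffEDist_ne_top_of_nonempty_of_bounded ⟨p, hp⟩ hne hA isBounded_closedBall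
  have hinf : dist p y - s ≤ infDist p (closedBall y s) := by
    refine (le_infDist hne).2 fun q hq ↦ ?_
    linarith [dist_triangle p q y, mem_closedBall.1 hq]
  linarith [infDist_le_hausdorffDist_of_mem hp hfin]

section StrongGeodesicExtendibility

variable {X : Type*} [PseudoMetricSpace X] {x y : X} {s t : ℝ}

theorem StrongGeodesicExtendibilityAt.exists_dist_eq_add (hx : StrongGeodesicExtendibilityAt x)
    (hyx : y ≠ x) (ht : 0 ≤ t) : ∃ p, dist x p = t ∧ dist y p = dist x y + t := by
  rcases ht.eq_or_lt with rfl | ht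
  · exact ⟨x, dist_self x, by rw [dist_comm, add_zero]⟩
  · obtain ⟨p, γ, hxp, hγ, rfl, -, rfl⟩ := hx t ht y hyx
    exact ⟨_, hxp, hγ.dist_zero_eq (by positivity)⟩

theorem StrongGeodesicExtendibilityAt.dist_add_sub_le_hausdorffDist_closedBall
    (hx : StrongGeodesicExtendibilityAt x) (hyx : y ≠ x) (ht : 0 ≤ t) (hs : 0 ≤ s) :
    dist x y + (t - s) ≤ hausdorffDist (closedBall x t) (closedBall y s) := by
  obtain ⟨p, hxp, hyp⟩ := hx.exists_dist_eq_add hyx ht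
  have hp : p ∈ closedBall x t := mem_closedBall'.2 hxp.le
  have hle : dist p y ≤ s + hausdorffDist (closedBall x t) (closedBall y s) :=
    dist_le_add_hausdorffDist_closedBall isBounded_closedBall hp hs
  linarith [dist_comm p y]

-- For `x = y` this fails in a one-point space, where all closed balls coincide.
theorem dist_add_abs_sub_le_hausdorffDist_closedBall (hx : StrongGeodesicExtendibilityAt x)
    (hy : StrongGeodesicExtendibilityAt y) (hxy : x ≠ y) (ht : 0 ≤ t) (hs : 0 ≤ s) :
    dist x y + |t - s| ≤ hausdorffDist (closedBall x t) (closedBall y s) := by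
  rcases abs_choice (t - s) with h | h <;> rw [h]
  · exact hx.dist_add_sub_le_hausdorffDist_closedBall hxy.symm ht hs
  · rw [neg_sub, dist_comm, hausdorffDist_comm]
    exact hy.dist_add_sub_le_hausdorffDist_closedBall hxy hs ht

theorem dist_le_hausdorffDist_closedBall (hx : StrongGeodesicExtendibilityAt x)
    (hy : StrongGeodesicExtendibilityAt y) (ht : 0 ≤ t) (hs : 0 ≤ s) :
    dist x y ≤ hausdorffDist (closedBall x t) (closedBall y s) := by
  rcases eq_or_ne x y with rfl | hxy
  · exact (dist_self x).trans_le hausdorffDist_nonneg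
  · exact (le_add_of_nonneg_right (abs_nonneg _)).trans
      (dist_add_abs_sub_le_hausdorffDist_closedBall hx hy hxy ht hs)

theorem induced_action_on_balls_proper_general {F : Type*} [FunLike F X X]
    (hsgc : ∀ x : X, StrongGeodesicExtendibilityAt x) (G : Set F)
    (hreturn : ∃ r > 0, {g | g ∈ G ∧ g x ∈ ball x r}.Finite) (ht : 0 ≤ t) :
    ∃ R > 0, {g | g ∈ G ∧ ∃ (y : X) (s : ℝ), 0 ≤ s ∧
      hausdorffDist (closedBall y s) (closedBall (g x) t) < R ∧
      hausdorffDist (closedBall y s) (closedBall x t) < R}.Finite := by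
  obtain ⟨r, hr, hfin⟩ := hreturn
  refine ⟨r / 2, half_pos hr, hfin.subset ?_⟩
  rintro g ⟨hg, y, s, hs, hgx, hx⟩
  refine ⟨hg, mem_ball.2 ?_⟩
  calc
    dist (g x) x ≤ dist y (g x) + dist y x := dist_triangle_left _ _ _
    _ ≤ hausdorffDist (closedBall y s) (closedBall (g x) t) +
          hausdorffDist (closedBall y s) (closedBall x t) :=
      add_le_add (dist_le_hausdorffDist_closedBall (hsgc y) (hsgc (g x)) hs ht)
        (dist_le_hausdorffDist_closedBall (hsgc y) (hsgc x) hs ht)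
    _ < r / 2 + r / 2 := add_lt_add hgx hx
    _ = r := add_halves r

end StrongGeodesicExtendibility

/-- Let `(X,d)` be a complete, locally compact, strongly geodesically
complete length space and `G` a group of isometries of `X` acting properly. Then the
induced isometric action of `G` on the space `Σ(X)` of compact closed balls with the
Hausdorff distance is proper. -/
theorem induced_action_on_balls_proper {X : Type*} [MetricSpace X] [CompleteSpace X]
    [LocallyCompactSpace X] (hX : IsLengthSpace X)
    (hsgc : ∀ x : X, StrongGeodesicExtendibilityAt x)
    (G : Subgroup (X ≃ᵢ X))
    (hproper : ∀ x : X, ∃ r > (0:ℝ),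
      {g : X ≃ᵢ X | g ∈ G ∧ ((g '' ball x r) ∩ ball x r).Nonempty}.Finite) :
    ∀ (x : X) (t : ℝ), 0 ≤ t → ∃ R > (0:ℝ),
      {g : X ≃ᵢ X | g ∈ G ∧ ∃ (y : X) (s : ℝ), 0 ≤ s ∧
        Metric.hausdorffDist (closedBall y s) (closedBall (g x) t) < R ∧
        Metric.hausdorffDist (closedBall y s) (closedBall x t) < R}.Finite := by
  intro x t ht
  obtain ⟨r, hr, hfin⟩ := hproper x
  exact induced_action_on_balls_proper_general hsgc (G : Set (X ≃ᵢ X)) ⟨r, hr, hfin.subset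
    fun g hg ↦ ⟨hg.1, g x, mem_image_of_mem g (mem_ball_self hr), hg.2⟩⟩ ht
end
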